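/- Every thin graph with at most n vertices is isomorphic to a subgraph of P_n⁴, the 4th power of the path with n vertices; that is, for every thin graph T with at most n vertices there exists an injective map φ : V(T) → {0, …, n−1} such that every edge {u, v} of T satisfies 0 < |φ(u) − φ(v)| ≤ 4. -/

import Mathlib

/-!
The graph has bandwidth at most `4` as soon as each component does (lay the components out one
after the other), and a layout with gaps can be compressed to `{0, …, |V| - 1}` without stretching
any edge. So it is enough to bound the bandwidth of a single component.

* `hasBandwidthLE_of_degree`: a connected graph of maximum degree at most `3` with at most `s`
  vertices of degree `3` has bandwidth at most `s + 2`. Build the layout greedily, always placing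
  next a neighbour of the earliest placed vertex that still has an unplaced neighbour. A new vertex
  `v` consumes at least one edge of the cut between placed and unplaced vertices and creates at most
  `deg v - 1`, so the cut never exceeds `2 + s`. Regarding a cut edge with placed end at position `p`
  as a job with deadline `p + k`, where `k = s + 2`, the greedy rule is earliest deadline first;
  it meets all deadlines because there are never more than `k` pending jobs.
* `hasBandwidthLE_of_augmentation`: by the previous point with `s = 0`, a cycle or a path has
  bandwidth at most `2`. Doubling all positions and putting every pendant vertex right after
  its neighbour gives bandwidth at most `4` for an augmentation.

For a component with at most two vertices of degree `3`, take `s = 2`.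
-/

/-- A (finite) cycle graph: connected and 2-regular. -/
def IsCycleGraph {V : Type*} (G : SimpleGraph V) : Prop :=
  G.Connected ∧ ∀ v, (G.neighborSet v).ncard = 2

/-- A path graph: connected, acyclic, with maximum degree at most 2. -/
def IsPathGraph {V : Type*} (G : SimpleGraph V) : Prop :=
  G.Connected ∧ G.IsAcyclic ∧ ∀ v, (G.neighborSet v).ncard ≤ 2

/-- `G` is an augmentation of a cycle or of a path: there is a set `C` of vertices on which `G`
induces a cycle or a path, and every vertex outside `C` has exactly one neighbour, which lies
in `C`, with distinct outside vertices having distinct neighbours (a matching into `C`). -/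
def IsAugmentationOfCycleOrPath {V : Type*} (G : SimpleGraph V) : Prop :=
  ∃ (C : Set V) (μ : V → V),
    (IsCycleGraph (SimpleGraph.induce C G) ∨ IsPathGraph (SimpleGraph.induce C G)) ∧
    (∀ u ∉ C, μ u ∈ C ∧ G.neighborSet u = {μ u}) ∧
    (∀ u ∉ C, ∀ u' ∉ C, u ≠ u' → μ u ≠ μ u')

/-- A graph is thin if it has maximum degree at most 3 and every connected component is either
an augmentation of a cycle or of a path, or has at most two vertices of degree 3. -/
def IsThin {V : Type*} (G : SimpleGraph V) : Prop :=
  (∀ v, (G.neighborSet v).ncard ≤ 3) ∧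
  ∀ c : G.ConnectedComponent,
    IsAugmentationOfCycleOrPath (SimpleGraph.induce c.supp G) ∨
    ({v ∈ c.supp | (G.neighborSet v).ncard = 3}).ncard ≤ 2

/-! ### Bandwidth: compression and disjoint unions -/

/-- `G` has bandwidth at most `k`: there is an injective placement of the vertices at natural
numbers, gaps being allowed, in which adjacent vertices are at distance at most `k`. The inequality
is one-sided because adjacency is symmetric. -/
def HasBandwidthLE {V : Type*} (G : SimpleGraph V) (k : ℕ) : Prop :=
  ∃ f : V → ℕ, Function.Injective f ∧ ∀ u v, G.Adj u v → f u ≤ f v + k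

/-- Replacing each position by its rank among the occupied positions removes all gaps. -/
lemma HasBandwidthLE.exists_lt_card {V : Type*} [Fintype V] {G : SimpleGraph V} {k : ℕ}
    (h : HasBandwidthLE G k) :
    ∃ f : V → ℕ, Function.Injective f ∧ (∀ v, f v < Fintype.card V) ∧
      ∀ u v, G.Adj u v → f u ≤ f v + k := by
  classical
  obtain ⟨K, hK, hadj⟩ := h
  let r : V → ℕ := fun v => (Finset.univ.filter fun w => K w < K v).card
  have hlt : ∀ u v, K u < K v → r u < r v := by
    intro u v huv
    refine Finset.card_lt_card (Finset.ssubset_iff_of_subset ?_ |>.2 ⟨u, ?_, ?_⟩)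
    · intro w; simp only [Finset.mem_filter, Finset.mem_univ, true_and]; omega
    · simpa using huv
    · simp
  refine ⟨r, ?_, ?_, ?_⟩
  · intro u v huv
    rcases lt_trichotomy (K u) (K v) with h | h | h
    · have := hlt u v h; omega
    · exact hK h
    · have := hlt v u h; omega
  · intro v
    exact Finset.card_lt_univ_of_notMem (x := v) (by simp)
  · intro u v huv
    -- The vertices counted for `u` but not for `v` have distinct positions in `[K v, K v + k)`.
    have h1 : (Finset.univ.filter fun w => K w < K u) ⊆
        (Finset.univ.filter fun w => K w < K v) ∪
          (Finset.univ.filter fun w => K w ∈ Finset.Ico (K v) (K v + k)) := by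
      intro w
      have := hadj u v huv
      simp only [Finset.mem_union, Finset.mem_filter, Finset.mem_univ, true_and, Finset.mem_Ico]
      omega
    have h2 : (Finset.univ.filter fun w => K w ∈ Finset.Ico (K v) (K v + k)).card ≤ k := by
      have := Finset.card_le_card_of_injOn (s := Finset.univ.filter fun w =>
        K w ∈ Finset.Ico (K v) (K v + k)) (t := Finset.Ico (K v) (K v + k)) K
        (fun w hw => (Finset.mem_filter.1 hw).2) hK.injOn
      simpa using this
    exact (Finset.card_le_card h1).trans ((Finset.card_union_le _ _).trans (by
      simp only [r]; omega))

/-- The components can be laid out in disjoint consecutive blocks. -/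
lemma hasBandwidthLE_of_components {V : Type*} [Fintype V] {G : SimpleGraph V} {k : ℕ}
    (h : ∀ c : G.ConnectedComponent, HasBandwidthLE (SimpleGraph.induce c.supp G) k) :
    HasBandwidthLE G k := by
  classical
  choose f hinj hlt hadj using fun c => (h c).exists_lt_card
  obtain ⟨e⟩ : Nonempty (G.ConnectedComponent ≃ Fin (Fintype.card G.ConnectedComponent)) :=
    ⟨Fintype.equivFin _⟩
  let N := Fintype.card V
  have hN : ∀ c x, f c x < N := fun c x =>
    (hlt c x).trans_le (Fintype.card_le_of_injective _ Subtype.val_injective)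
  let c : V → G.ConnectedComponent := G.connectedComponentMk
  let g : V → ℕ := fun v => f (c v) ⟨v, rfl⟩
  have hg : ∀ (d : G.ConnectedComponent) (v : V) (hv : v ∈ d.supp), f d ⟨v, hv⟩ = g v := by
    rintro d v rfl; rfl
  have hgN : ∀ v, g v < N := fun v => hN _ _
  refine ⟨fun v => N * (e (c v)).val + g v, ?_, ?_⟩
  · intro u v huv
    have hpos : 0 < N := (Nat.zero_le _).trans_lt (hgN u)
    have hc : c u = c v := by
      have := congrArg (· / N) huv
      simp only [Nat.mul_add_div hpos, Nat.div_eq_of_lt (hgN _), add_zero] at this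
      exact e.injective (Fin.ext this)
    have hgv : g u = g v := by
      simp only [hc] at huv; omega
    have hu : u ∈ (c v).supp := hc
    have hv : v ∈ (c v).supp := rfl
    have := hinj (c v) (a₁ := ⟨u, hu⟩) (a₂ := ⟨v, hv⟩) (by rw [hg, hg, hgv])
    exact congrArg Subtype.val this
  · intro u v huv
    have hc : c u = c v := SimpleGraph.ConnectedComponent.sound huv.reachable
    have hu : u ∈ (c v).supp := hc
    have hv : v ∈ (c v).supp := rfl
    have := hadj (c v) ⟨u, hu⟩ ⟨v, hv⟩ (by simpa using huv)
    rw [hg, hg] at this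
    simp only [hc]; omega

/-! ### Edge cuts -/

open Classical in
/-- The edges between `S` and its complement, as pairs with first entry in `S`. -/
noncomputable def cutEdges {V : Type*} [Fintype V] (G : SimpleGraph V) (S : Finset V) :
    Finset (V × V) :=
  Finset.univ.filter fun p => p.1 ∈ S ∧ p.2 ∉ S ∧ G.Adj p.1 p.2

lemma mem_cutEdges {V : Type*} [Fintype V] {G : SimpleGraph V} {S : Finset V} {p : V × V} :
    p ∈ cutEdges G S ↔ p.1 ∈ S ∧ p.2 ∉ S ∧ G.Adj p.1 p.2 := by
  simp [cutEdges]

/-- Moving an endpoint `v` of a cut edge into `S` removes that edge from the cut and adds at most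
the remaining edges at `v`. -/
lemma card_cutEdges_insert {V : Type*} [Fintype V] [DecidableEq V] {G : SimpleGraph V}
    {S : Finset V} {u v : V} (huv : (u, v) ∈ cutEdges G S) :
    (cutEdges G (insert v S)).card + 2 ≤ (cutEdges G S).card + (G.neighborSet v).ncard := by
  classical
  have h := mem_cutEdges.1 huv
  have hsub : cutEdges G (insert v S) ⊆ (cutEdges G S).erase (u, v) ∪
      ((G.neighborSet v).toFinset.erase u).image (fun w => (v, w)) := by
    rintro ⟨a, b⟩ hp
    rw [mem_cutEdges] at hp
    obtain ⟨ha, hb, hab⟩ := hp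
    simp only [Finset.mem_insert, not_or] at ha hb hab
    simp only [Finset.mem_union, Finset.mem_erase, mem_cutEdges, Finset.mem_image,
      Set.mem_toFinset, SimpleGraph.mem_neighborSet, Prod.mk.injEq]
    rcases ha with rfl | ha
    · right
      refine ⟨b, ⟨?_, hab⟩, rfl, rfl⟩
      rintro rfl
      exact hb.2 h.1
    · left
      exact ⟨fun hh => hb.1 (Prod.mk.inj hh).2, ha, hb.2, hab⟩
  have h1 := (Finset.card_le_card hsub).trans
    ((Finset.card_union_le _ _).trans (Nat.add_le_add_left Finset.card_image_le _))
  have hmem : u ∈ (G.neighborSet v).toFinset := by simpa using h.2.2.symm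
  rw [Finset.card_erase_of_mem huv, Finset.card_erase_of_mem hmem] at h1
  have h2 := Finset.card_pos.2 ⟨_, huv⟩
  have h3 := Finset.card_pos.2 ⟨_, hmem⟩
  rw [Set.ncard_eq_toFinset_card']
  omega

/-- In a connected graph every proper nonempty vertex set has an outgoing edge. -/
lemma cutEdges_nonempty {V : Type*} [Fintype V] {G : SimpleGraph V} (hG : G.Connected)
    {S : Finset V} {a b : V} (ha : a ∈ S) (hb : b ∉ S) : (cutEdges G S).Nonempty := by
  obtain ⟨w⟩ := hG.preconnected a b
  obtain ⟨d, -, h1, h2⟩ := w.exists_boundary_dart (S : Set V) ha hb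
  exact ⟨d.toProd, mem_cutEdges.2 ⟨h1, h2, d.adj⟩⟩

/-! ### The greedy layout -/

/-- A state of the greedy layout: the vertices of `S` occupy the positions below `S.card`.
The next free position is `S.card`, so `deadlines` says that at most `j` cut edges need their second
endpoint placed at one of the next `j` positions in order to have length at most `k`. -/
structure PartialLayout {V : Type*} [Fintype V] (G : SimpleGraph V) (k : ℕ)
    (S : Finset V) (f : V → ℕ) : Prop where
  injOn : Set.InjOn f S
  lt_card : ∀ u ∈ S, f u < S.card
  adj_le : ∀ u ∈ S, ∀ v ∈ S, G.Adj u v → f u ≤ f v + k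
  deadlines : ∀ j ≤ k, ((cutEdges G S).filter fun p => f p.1 + k + 1 ≤ S.card + j).card ≤ j

/-- One earliest deadline first step. -/
lemma PartialLayout.step {V : Type*} [Fintype V] [DecidableEq V] {G : SimpleGraph V} {k : ℕ}
    {S : Finset V} {f : V → ℕ} (h : PartialLayout G k S f) {u v : V}
    (huv : (u, v) ∈ cutEdges G S) (hmin : ∀ p ∈ cutEdges G S, f u ≤ f p.1)
    (hcut : (cutEdges G (insert v S)).card ≤ k) :
    PartialLayout G k (insert v S) (Function.update f v S.card) := by
  have hv : v ∉ S := (mem_cutEdges.1 huv).2.1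
  have hne : ∀ w ∈ S, w ≠ v := fun w hw hwv => hv (hwv ▸ hw)
  have hup : ∀ w ∈ S, Function.update f v S.card w = f w := fun w hw =>
    Function.update_of_ne (hne w hw) _ _
  have hcard : (insert v S).card = S.card + 1 := Finset.card_insert_of_notMem hv
  refine ⟨?_, ?_, ?_, ?_⟩
  · intro a ha b hb hab
    rw [Finset.mem_coe, Finset.mem_insert] at ha hb
    rcases ha with rfl | ha <;> rcases hb with rfl | hb
    · rfl
    · rw [hup b hb, Function.update_self] at hab
      have := h.lt_card b hb; omega
    · rw [hup a ha, Function.update_self] at hab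
      have := h.lt_card a ha; omega
    · rw [hup a ha, hup b hb] at hab
      exact h.injOn ha hb hab
  · intro a ha
    rw [hcard]
    rcases Finset.mem_insert.1 ha with rfl | ha
    · simp
    · rw [hup a ha]
      have := h.lt_card a ha; omega
  · intro a ha b hb hab
    rw [Finset.mem_insert] at ha hb
    rcases ha with rfl | ha <;> rcases hb with rfl | hb
    · exact absurd hab (G.irrefl)
    · rw [hup b hb, Function.update_self]
      -- Were the new edge too long, it would have been overdue, violating the bound for `j = 0`.
      by_contra hlt
      have h0 := h.deadlines 0 (Nat.zero_le _)
      rw [Nat.le_zero, Finset.card_eq_zero] at h0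
      have hm : (b, a) ∈ (cutEdges G S).filter fun p => f p.1 + k + 1 ≤ S.card + 0 :=
        Finset.mem_filter.2 ⟨mem_cutEdges.2 ⟨hb, hv, hab.symm⟩, by dsimp only; omega⟩
      rw [h0] at hm
      exact absurd hm (Finset.notMem_empty _)
    · rw [hup a ha, Function.update_self]
      have := h.lt_card a ha; omega
    · rw [hup a ha, hup b hb]
      exact h.adj_le a ha b hb hab
  · intro j hj
    rcases Nat.lt_or_ge j k with hjk | hjk
    -- Edges at `v` are not urgent for `j < k`; the other urgent edges were counted for `j + 1`
    -- together with `(u, v)`, which has left the cut.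
    · have hsub : ∀ p ∈ (cutEdges G (insert v S)).filter fun p =>
          Function.update f v S.card p.1 + k + 1 ≤ (insert v S).card + j,
          p ∈ cutEdges G S ∧ p.2 ≠ v ∧ f p.1 + k + 1 ≤ S.card + (j + 1) := by
        rintro ⟨a, b⟩ hp
        rw [Finset.mem_filter, mem_cutEdges, hcard] at hp
        obtain ⟨⟨ha, hb, hab⟩, hle⟩ := hp
        dsimp only at ha hb hab hle ⊢
        rw [Finset.mem_insert, not_or] at hb
        rcases Finset.mem_insert.1 ha with rfl | ha
        · rw [Function.update_self] at hle; omega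
        · rw [hup a ha] at hle
          exact ⟨mem_cutEdges.2 ⟨ha, hb.2, hab⟩, hb.1, by omega⟩
      rcases Finset.eq_empty_or_nonempty ((cutEdges G (insert v S)).filter fun p =>
          Function.update f v S.card p.1 + k + 1 ≤ (insert v S).card + j) with he | ⟨p, hp⟩
      · rw [he]; simp
      · have hp' := hsub p hp
        have hmem : (u, v) ∈ (cutEdges G S).filter fun p => f p.1 + k + 1 ≤ S.card + (j + 1) := by
          refine Finset.mem_filter.2 ⟨huv, ?_⟩
          have := hmin p hp'.1
          dsimp only; omega
        have hle : (cutEdges G (insert v S)).filter (fun p =>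
            Function.update f v S.card p.1 + k + 1 ≤ (insert v S).card + j) ⊆
            ((cutEdges G S).filter fun p => f p.1 + k + 1 ≤ S.card + (j + 1)).erase (u, v) := by
          intro q hq
          have hq' := hsub q hq
          refine Finset.mem_erase.2 ⟨?_, Finset.mem_filter.2 ⟨hq'.1, hq'.2.2⟩⟩
          rintro rfl
          exact hq'.2.1 rfl
        have h1 := Finset.card_le_card hle
        rw [Finset.card_erase_of_mem hmem] at h1
        have h2 := h.deadlines (j + 1) hjk
        omega
    · obtain rfl : j = k := le_antisymm hj hjk
      exact (Finset.card_filter_le _ _).trans hcut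

/-- A connected graph with maximum degree at most `3` and at most `s` vertices of degree `3` has
bandwidth at most `s + 2`. -/
lemma hasBandwidthLE_of_degree {V : Type*} [Fintype V] {G : SimpleGraph V} (hG : G.Connected)
    {s : ℕ} (hdeg : ∀ v, (G.neighborSet v).ncard ≤ 3)
    (hs : {v | (G.neighborSet v).ncard = 3}.ncard ≤ s) : HasBandwidthLE G (s + 2) := by
  classical
  let D : Finset V → ℕ := fun S => (S.filter fun v => (G.neighborSet v).ncard = 3).card
  have hD : ∀ S, D S ≤ s := by
    intro S
    refine le_trans ?_ hs
    rw [Set.ncard_eq_toFinset_card']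
    exact Finset.card_le_card fun v hv => by simpa using (Finset.mem_filter.1 hv).2
  obtain ⟨v₀⟩ := hG.nonempty
  have key : ∀ m, m + 1 ≤ Fintype.card V → ∃ S f, S.card = m + 1 ∧
      PartialLayout G (s + 2) S f ∧ (cutEdges G S).card ≤ 2 + D S := by
    intro m
    induction m with
    | zero =>
      intro _
      have hcut : (cutEdges G {v₀}).card ≤ 2 + D {v₀} := by
        have h1 : (cutEdges G {v₀}).card ≤ (G.neighborSet v₀).ncard := by
          rw [Set.ncard_eq_toFinset_card']
          refine Finset.card_le_card_of_injOn Prod.snd ?_ ?_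
          · rintro ⟨a, b⟩ hp
            have := mem_cutEdges.1 hp
            simp only [Finset.mem_singleton] at this
            obtain ⟨rfl, -, hab⟩ := this
            simpa using hab
          · rintro ⟨a, b⟩ hp ⟨a', b'⟩ hp' hbb
            have h1 := (mem_cutEdges.1 hp).1
            have h2 := (mem_cutEdges.1 hp').1
            simp only [Finset.mem_singleton] at h1 h2 hbb
            rw [h1, h2, hbb]
        have h2 := hdeg v₀
        simp only [D, Finset.filter_singleton]
        split_ifs with h
        · simp; omega
        · simp; omega
      refine ⟨{v₀}, fun _ => 0, rfl, ⟨?_, by simp, by simp, ?_⟩, hcut⟩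
      · simp
      · intro j hj
        rcases Nat.lt_or_ge j (s + 2) with hjk | hjk
        · rw [Finset.filter_false_of_mem]
          · simp
          · intro p _
            rw [Finset.card_singleton]; omega
        · refine (Finset.card_filter_le _ _).trans ?_
          have := hD {v₀}
          omega
    | succ m ih =>
      intro hm
      obtain ⟨S, f, hcard, hL, hcut⟩ := ih (by omega)
      obtain ⟨a, ha⟩ : S.Nonempty := Finset.card_pos.1 (by omega)
      obtain ⟨b, hb⟩ : ∃ b, b ∉ S := by
        by_contra! hall
        have := Finset.card_eq_iff_eq_univ S |>.2 (Finset.eq_univ_iff_forall.2 hall)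
        omega
      obtain ⟨⟨u, v⟩, huv, hmin⟩ :=
        Finset.exists_min_image (cutEdges G S) (fun p => f p.1) (cutEdges_nonempty hG ha hb)
      have hv : v ∉ S := (mem_cutEdges.1 huv).2.1
      have hcut' : (cutEdges G (insert v S)).card ≤ 2 + D (insert v S) := by
        have h1 := card_cutEdges_insert huv
        have h2 := hdeg v
        simp only [D, Finset.filter_insert] at hcut ⊢
        split_ifs with h
        · rw [Finset.card_insert_of_notMem (by simp [hv])]
          omega
        · omega
      refine ⟨insert v S, _, ?_, hL.step huv hmin ?_, hcut'⟩
      · rw [Finset.card_insert_of_notMem hv, hcard]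
      · have := hD (insert v S)
        omega
  have hpos : 0 < Fintype.card V := Fintype.card_pos_iff.2 ⟨v₀⟩
  obtain ⟨S, f, hcard, hL, -⟩ := key (Fintype.card V - 1) (by omega)
  obtain rfl : S = Finset.univ := (Finset.card_eq_iff_eq_univ S).1 (by omega)
  exact ⟨f, fun a b hab => hL.injOn (by simp) (by simp) hab,
    fun u v huv => hL.adj_le u (by simp) v (by simp) huv⟩

/-! ### Augmentations and thin graphs -/

/-- An augmentation of a cycle or a path has bandwidth at most `4`: double the positions in a
bandwidth-`2` layout of the core and put each pendant vertex right after its neighbour. -/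
lemma hasBandwidthLE_of_augmentation {V : Type*} [Fintype V] {G : SimpleGraph V}
    (h : IsAugmentationOfCycleOrPath G) : HasBandwidthLE G 4 := by
  classical
  obtain ⟨C, μ, hC, hμ, hμinj⟩ := h
  obtain ⟨hconn, hdeg⟩ : (SimpleGraph.induce C G).Connected ∧
      ∀ v, ((SimpleGraph.induce C G).neighborSet v).ncard ≤ 2 := by
    rcases hC with h | h
    · exact ⟨h.1, fun v => (h.2 v).le⟩
    · exact ⟨h.1, h.2.2⟩
  obtain ⟨g, hg, hadj⟩ := hasBandwidthLE_of_degree (s := 0) hconn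
    (fun v => (hdeg v).trans (by omega)) (by
      have : {v | ((SimpleGraph.induce C G).neighborSet v).ncard = 3} = ∅ :=
        Set.eq_empty_of_forall_notMem fun v (hv : _ = 3) => by have := hdeg v; omega
      rw [this]; simp)
  let K : V → ℕ := fun v =>
    if hv : v ∈ C then 2 * g ⟨v, hv⟩ else 2 * g ⟨μ v, (hμ v hv).1⟩ + 1
  have hKin : ∀ v (hv : v ∈ C), K v = 2 * g ⟨v, hv⟩ := fun v hv => dif_pos hv
  have hKout : ∀ v (hv : v ∉ C), K v = 2 * g ⟨μ v, (hμ v hv).1⟩ + 1 := fun v hv => dif_neg hv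
  refine ⟨K, ?_, ?_⟩
  · intro u v huv
    by_cases hu : u ∈ C <;> by_cases hv : v ∈ C
    · rw [hKin u hu, hKin v hv] at huv
      exact congrArg Subtype.val (hg (a₁ := ⟨u, hu⟩) (a₂ := ⟨v, hv⟩) (by omega))
    · rw [hKin u hu, hKout v hv] at huv; omega
    · rw [hKout u hu, hKin v hv] at huv; omega
    · rw [hKout u hu, hKout v hv] at huv
      by_contra hne
      exact hμinj u hu v hv hne (congrArg Subtype.val
        (hg (a₁ := ⟨μ u, (hμ u hu).1⟩) (a₂ := ⟨μ v, (hμ v hv).1⟩) (by omega)))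
  · have hout : ∀ u v, u ∉ C → G.Adj u v → K u = K v + 1 := by
      intro u v hu huv
      have hmem : v ∈ G.neighborSet u := huv
      rw [(hμ u hu).2, Set.mem_singleton_iff] at hmem
      subst hmem
      rw [hKout u hu, hKin _ (hμ u hu).1]
    intro u v huv
    by_cases hu : u ∈ C
    · by_cases hv : v ∈ C
      · rw [hKin u hu, hKin v hv]
        have := hadj ⟨u, hu⟩ ⟨v, hv⟩ (by simpa using huv)
        omega
      · have := hout v u hv huv.symm
        omega
    · have := hout u v hu huv
      omega

lemma ncard_neighborSet_induce_le {V : Type*} [Fintype V] (G : SimpleGraph V) (A : Set V) (v : A) :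
    ((SimpleGraph.induce A G).neighborSet v).ncard ≤ (G.neighborSet v).ncard := by
  refine Set.ncard_le_ncard_of_injOn Subtype.val ?_ Subtype.val_injective.injOn (Set.toFinite _)
  intro w hw
  simpa using hw

/-- every thin graph with at most `n` vertices is a subgraph of `P_n⁴`: there is
an injection `φ : V(T) → {0,…,n-1}` such that every edge `{u,v}` of `T` satisfies
`0 < |φ u - φ v| ≤ 4`. -/
theorem thin_subgraph_of_path_power {V : Type*} [Fintype V] (n : ℕ)
    (T : SimpleGraph V) (hthin : IsThin T) (hcard : Fintype.card V ≤ n) :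
    ∃ φ : V → Fin n, Function.Injective φ ∧
      ∀ u v : V, T.Adj u v →
        0 < |((φ u : ℕ) : ℤ) - ((φ v : ℕ) : ℤ)| ∧
        |((φ u : ℕ) : ℤ) - ((φ v : ℕ) : ℤ)| ≤ 4 := by
  classical
  obtain ⟨hdeg, hcomp⟩ := hthin
  have hT : HasBandwidthLE T 4 := by
    refine hasBandwidthLE_of_components fun c => ?_
    rcases hcomp c with h | h
    · exact hasBandwidthLE_of_augmentation h
    · refine hasBandwidthLE_of_degree (s := 2) c.connected_toSimpleGraph
        (fun v => (ncard_neighborSet_induce_le T _ v).trans (hdeg v)) (le_trans ?_ h)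
      refine Set.ncard_le_ncard_of_injOn Subtype.val ?_ Subtype.val_injective.injOn
        (Set.toFinite _)
      intro v hv
      have h1 := ncard_neighborSet_induce_le T _ v
      have h2 := hdeg v
      have h3 : ((SimpleGraph.induce c.supp T).neighborSet v).ncard = 3 := hv
      exact ⟨v.2, le_antisymm h2 (h3 ▸ h1)⟩
  obtain ⟨f, hinj, hlt, hadj⟩ := hT.exists_lt_card
  refine ⟨fun v => ⟨f v, (hlt v).trans_le hcard⟩, fun u v huv => hinj (Fin.mk.inj huv), ?_⟩
  intro u v huv
  have h1 := hadj u v huv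
  have h2 := hadj v u huv.symm
  have h3 : f u ≠ f v := hinj.ne huv.ne
  refine ⟨abs_pos.2 ?_, abs_le.2 ⟨?_, ?_⟩⟩ <;> dsimp only <;> omega
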